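/- Let A⁺ ⊆ ℝⁿ be a finite nonempty set, let β ∈ ℝⁿ with β ∉ A⁺, let c_α ≥ 0 for all α ∈ A⁺ and let c_β < 0. Then the exponential sum f(x) = ∑_{α∈A⁺} c_α·exp(⟨x,α⟩) + c_β·exp(⟨x,β⟩) is nonnegative for all x ∈ ℝⁿ if and only if there exists λ ∈ Λ(A⁺,β) such that −c_β ≤ ∏_{α∈A⁺, λ_α>0} (c_α/λ_α)^{λ_α}. -/

import Mathlib

open Finset

/-- `Λ(A⁺, β)`: barycentric coordinates of `β` with respect to `A⁺`. -/
def IsBary {n : ℕ} (Ap : Finset (Fin n → ℝ)) (β : Fin n → ℝ) (lam : (Fin n → ℝ) → ℝ) : Prop :=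
  (∀ α ∈ Ap, 0 ≤ lam α) ∧ (∑ α ∈ Ap, lam α = 1) ∧ (∑ α ∈ Ap, lam α • α = β)

/-- The dual (entropy) half: abstract version with positive coefficients. -/
theorem age_dual_aux {ι : Type*} [Fintype ι] [Nonempty ι] {n : ℕ}
    (a : ι → Fin n → ℝ) (d : ι → ℝ) (hd : ∀ i, 0 < d i) (b : ℝ) (hb : 0 < b)
    (h : ∀ x : Fin n → ℝ, b ≤ ∑ i, d i * Real.exp (∑ j, x j * a i j)) :
    ∃ l : ι → ℝ, l ∈ stdSimplex ℝ ι ∧ ∑ i, l i • a i = 0 ∧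
      Real.log b ≤ ∑ i, (l i * Real.log (d i) + Real.negMulLog (l i)) := by
  classical
  by_contra hcon
  push Not at hcon
  set H : (ι → ℝ) → ℝ := fun l => ∑ i, (l i * Real.log (d i) + Real.negMulLog (l i)) with hH
  set L : (ι → ℝ) → (Fin n → ℝ) := fun l => ∑ i, l i • a i with hL
  have hHc : Continuous H := by
    refine continuous_finsetSum _ fun i _ => ?_
    exact ((continuous_apply i).mul continuous_const).add
      (Real.continuous_negMulLog.comp (continuous_apply i))
  have hLc : Continuous L := by
    refine continuous_finsetSum _ fun i _ => ?_
    exact (continuous_apply i).smul continuous_const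
  set S : Set ((Fin n → ℝ) × ℝ) := {p | ∃ l ∈ stdSimplex ℝ ι, L l = p.1 ∧ p.2 ≤ H l} with hS
  have hSclosed : IsClosed S := by
    have hK : IsCompact ((fun l => (L l, H l)) '' stdSimplex ℝ ι) :=
      (isCompact_stdSimplex ℝ ι).image (hLc.prodMk hHc)
    have hC : IsClosed (({0} : Set (Fin n → ℝ)) ×ˢ (Set.Iic (0 : ℝ))) :=
      isClosed_singleton.prod isClosed_Iic
    have := hC.add_right_of_isCompact hK
    convert this using 1
    ext p
    rw [Set.mem_add]
    constructor
    · rintro ⟨l, hl, h1, h2⟩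
      refine ⟨(0, p.2 - H l), ⟨by simp, by simpa using h2⟩, _, ⟨l, hl, rfl⟩, ?_⟩
      ext1 <;> simp [h1]
    · rintro ⟨q, ⟨hq1, hq2⟩, _, ⟨l, hl, rfl⟩, rfl⟩
      refine ⟨l, hl, ?_, ?_⟩
      · have : q.1 = 0 := hq1
        simp [this]
      · have : q.2 ≤ 0 := hq2
        simpa using this
  have hSconv : Convex ℝ S := by
    rintro p ⟨l, hl, h1, h2⟩ q ⟨m, hm, h3, h4⟩ s t hs ht hst
    refine ⟨s • l + t • m, convex_stdSimplex ℝ ι hl hm hs ht hst, ?_, ?_⟩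
    · simp only [hL, Prod.fst_add, Prod.smul_fst, ← h1, ← h3, Finset.smul_sum,
        ← Finset.sum_add_distrib, Pi.add_apply, Pi.smul_apply, smul_eq_mul, add_smul, mul_smul]
    · have : s * H l + t * H m ≤ H (s • l + t • m) := by
        simp only [hH, Finset.mul_sum, ← Finset.sum_add_distrib]
        refine Finset.sum_le_sum fun i _ => ?_
        have := Real.concaveOn_negMulLog.2 (Set.mem_Ici.2 (hl.1 i)) (Set.mem_Ici.2 (hm.1 i)) hs ht hst
        simp only [smul_eq_mul, Pi.add_apply, Pi.smul_apply] at this ⊢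
        linarith
      simp only [Prod.snd_add, Prod.smul_snd, smul_eq_mul]
      nlinarith [mul_le_mul_of_nonneg_left h2 hs, mul_le_mul_of_nonneg_left h4 ht]
  have hnot : ((0 : Fin n → ℝ), Real.log b) ∉ S := by
    rintro ⟨l, hl, h1, h2⟩
    exact absurd h2 (not_le.2 (hcon l hl h1))
  obtain ⟨φ, u, hφ, hu⟩ := geometric_hahn_banach_closed_point hSconv hSclosed hnot
  set x : Fin n → ℝ := fun j => φ (Pi.single j 1, 0) with hx
  set s : ℝ := φ (0, 1) with hs
  have hφf : ∀ (v : Fin n → ℝ) (t : ℝ), φ (v, t) = ∑ j, x j * v j + t * s := by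
    intro v t
    have e : (v, t) = ∑ j, v j • ((Pi.single j 1 : Fin n → ℝ), (0 : ℝ)) + t • ((0 : Fin n → ℝ), (1 : ℝ)) := by
      ext k
      · simp [Prod.fst_sum, Finset.sum_apply, Pi.single_apply]
      · simp [Prod.snd_sum]
    rw [e, map_add, map_sum, map_smul]
    simp only [map_smul, smul_eq_mul, hx, hs]
    congr 1
    exact Finset.sum_congr rfl fun j _ => mul_comm _ _
  set y : ι → ℝ := fun i => ∑ j, x j * a i j with hy
  have hLx : ∀ l : ι → ℝ, ∑ j, x j * L l j = ∑ i, l i * y i := by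
    intro l
    simp only [hL, hy, Finset.sum_apply, Pi.smul_apply, smul_eq_mul, Finset.mul_sum]
    rw [Finset.sum_comm]
    exact Finset.sum_congr rfl fun i _ => Finset.sum_congr rfl fun j _ => by ring
  have hu' : u < Real.log b * s := by simpa [hφf] using hu
  have key : ∀ l ∈ stdSimplex ℝ ι, ∀ t ≤ H l, ∑ i, l i * y i + t * s < Real.log b * s := by
    intro l hl t ht
    have := hφ (L l, t) ⟨l, hl, rfl, ht⟩
    rw [hφf, hLx] at this
    linarith
  obtain ⟨i0⟩ := ‹Nonempty ι›
  have hs0 : 0 ≤ s := by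
    by_contra hneg
    push Not at hneg
    have h1 := single_mem_stdSimplex ℝ i0
    set l0 : ι → ℝ := Pi.single i0 1
    set C := ∑ i, l0 i * y i with hC
    set t := min (H l0) ((Real.log b * s - C) / s)
    have := key l0 h1 t (min_le_left _ _)
    have h2 : t ≤ (Real.log b * s - C) / s := min_le_right _ _
    have h3 := mul_le_mul_of_nonpos_right h2 hneg.le
    rw [div_mul_cancel₀ _ hneg.ne] at h3
    linarith
  rcases hs0.eq_or_lt with hs0 | hs0
  · -- s = 0
    have hyneg : ∀ i, y i < 0 := by
      intro i
      have := key (Pi.single i 1) (single_mem_stdSimplex ℝ i) _ le_rfl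
      simpa [← hs0, Pi.single_apply] using this
    have hlim : Filter.Tendsto (fun T : ℝ => ∑ i, d i * Real.exp (T * y i)) Filter.atTop
        (nhds (∑ i, d i * 0)) := by
      refine tendsto_finsetSum _ fun i _ => Filter.Tendsto.const_mul _ ?_
      exact Real.tendsto_exp_atBot.comp (Filter.tendsto_id.atTop_mul_const_of_neg (hyneg i))
    have : b ≤ ∑ i, d i * 0 := by
      refine ge_of_tendsto' hlim fun T => ?_
      have := h (T • x)
      simpa [hy, Finset.mul_sum, mul_assoc] using this
    simp at this
    linarith
  · set Z : ℝ := ∑ i, d i * Real.exp (y i / s) with hZ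
    have hw : ∀ i, 0 < d i * Real.exp (y i / s) := fun i => mul_pos (hd i) (Real.exp_pos _)
    have hZpos : 0 < Z := Finset.sum_pos (fun i _ => hw i) ⟨i0, Finset.mem_univ _⟩
    have hbZ : b ≤ Z := by
      have := h (s⁻¹ • x)
      convert this using 4 with i
      simp [hy, div_eq_inv_mul, Finset.mul_sum, mul_assoc]
    set l : ι → ℝ := fun i => d i * Real.exp (y i / s) / Z with hl
    have hlsum : ∑ i, l i = 1 := by
      rw [hl, ← Finset.sum_div, div_self hZpos.ne']
    have hlm : l ∈ stdSimplex ℝ ι := ⟨fun i => (div_pos (hw i) hZpos).le, hlsum⟩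
    have h1 := key l hlm _ le_rfl
    have h2 : ∑ i, l i * y i + H l * s = Real.log Z * s := by
      have : ∀ i, l i * y i + (l i * Real.log (d i) + Real.negMulLog (l i)) * s
          = l i * (Real.log Z * s) := by
        intro i
        have e : Real.log (l i) = Real.log (d i) + y i / s - Real.log Z := by
          rw [hl]
          simp only
          rw [Real.log_div (hw i).ne' hZpos.ne', Real.log_mul (hd i).ne' (Real.exp_pos _).ne',
            Real.log_exp]
        rw [Real.negMulLog, e]
        field_simp
        ring
      rw [hH]
      simp only
      rw [Finset.sum_mul, ← Finset.sum_add_distrib, Finset.sum_congr rfl fun i _ => this i,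
        ← Finset.sum_mul, hlsum, one_mul]
    have h3 := Real.log_le_log hb hbZ
    nlinarith [mul_le_mul_of_nonneg_right h3 hs0.le]

/-- An AGE exponential sum is nonnegative iff some barycentric coordinate
vector satisfies the circuit-number inequality. -/
theorem age_nonneg_iff_exists_bary {n : ℕ}
    (Ap : Finset (Fin n → ℝ)) (hAp : Ap.Nonempty)
    (β : Fin n → ℝ) (hβ : β ∉ Ap)
    (c : (Fin n → ℝ) → ℝ) (hc : ∀ α ∈ Ap, 0 ≤ c α) (cβ : ℝ) (hcβ : cβ < 0) :
    (∀ x : Fin n → ℝ,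
        0 ≤ (∑ α ∈ Ap, c α * Real.exp (∑ i, x i * α i)) + cβ * Real.exp (∑ i, x i * β i))
      ↔ ∃ lam : (Fin n → ℝ) → ℝ, IsBary Ap β lam ∧
          -cβ ≤ ∏ α ∈ Ap.filter (fun α => 0 < lam α), (c α / lam α) ^ (lam α) := by
  classical
  constructor
  · intro h
    set B := Ap.filter (fun α => 0 < c α) with hB
    have hBsub : B ⊆ Ap := Finset.filter_subset _ _
    have hsum : ∀ x : Fin n → ℝ,
        -cβ ≤ ∑ i : B, c i * Real.exp (∑ j, x j * ((i : Fin n → ℝ) - β) j) := by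
      intro x
      have h1 := h x
      have e : ∑ α ∈ Ap, c α * Real.exp (∑ i, x i * α i)
          = (∑ i : B, c i * Real.exp (∑ j, x j * ((i : Fin n → ℝ) - β) j))
            * Real.exp (∑ i, x i * β i) := by
        rw [Finset.sum_coe_sort B (fun i => c i * Real.exp (∑ j, x j * (i - β) j)),
          Finset.sum_mul]
        rw [← Finset.sum_subset hBsub]
        · refine Finset.sum_congr rfl fun α _ => ?_
          rw [mul_assoc, ← Real.exp_add, ← Finset.sum_add_distrib]
          congr 2
          exact Finset.sum_congr rfl fun i _ => by simp only [Pi.sub_apply]; ring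
        · intro α hα hα'
          have : c α = 0 := by
            by_contra hne
            exact hα' (Finset.mem_filter.2 ⟨hα, lt_of_le_of_ne (hc α hα) (Ne.symm hne)⟩)
          simp [this]
      rw [e, ← add_mul] at h1
      have := nonneg_of_mul_nonneg_left h1 (Real.exp_pos _)
      linarith
    have hne : Nonempty B := by
      by_contra hemp
      rw [not_nonempty_iff] at hemp
      have := hsum 0
      rw [Finset.univ_eq_empty, Finset.sum_empty] at this
      linarith
    obtain ⟨l, hl, hl0, hlog⟩ := age_dual_aux (fun i : B => (i : Fin n → ℝ) - β) (fun i => c i)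
      (fun i => (Finset.mem_filter.1 i.2).2) (-cβ) (by linarith) hsum
    set lam : (Fin n → ℝ) → ℝ := fun α => if hα : α ∈ B then l ⟨α, hα⟩ else 0 with hlam
    have hlamB : ∀ i : B, lam i = l i := fun i => by simp [hlam]
    have hlam0 : ∀ α, α ∉ B → lam α = 0 := fun α hα => by simp [hlam, hα]
    have hs1 : ∑ α ∈ Ap, lam α = 1 := by
      rw [← Finset.sum_subset hBsub (fun α _ hα => hlam0 α hα), ← Finset.sum_coe_sort]
      simp only [hlamB]
      exact hl.2
    have hlnn : ∀ α, 0 ≤ lam α := by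
      intro α
      by_cases hα : α ∈ B
      · simpa [hlam, hα] using hl.1 ⟨α, hα⟩
      · rw [hlam0 α hα]
    refine ⟨lam, ⟨fun α _ => hlnn α, hs1, ?_⟩, ?_⟩
    · rw [← Finset.sum_subset hBsub (fun α _ hα => by rw [hlam0 α hα, zero_smul]),
        ← Finset.sum_coe_sort]
      simp only [hlamB]
      simp only [smul_sub, Finset.sum_sub_distrib, ← Finset.sum_smul] at hl0
      rw [hl.2, one_smul, sub_eq_zero] at hl0
      exact hl0
    · have hF : ∀ α ∈ Ap.filter (fun α => 0 < lam α), 0 < c α ∧ 0 < lam α := by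
        intro α hα
        have h1 := (Finset.mem_filter.1 hα).2
        refine ⟨?_, h1⟩
        by_contra hn
        have : α ∉ B := fun h' => hn (Finset.mem_filter.1 h').2
        rw [hlam0 α this] at h1
        exact lt_irrefl _ h1
      have e : ∏ α ∈ Ap.filter (fun α => 0 < lam α), (c α / lam α) ^ (lam α)
          = Real.exp (∑ i : B, (l i * Real.log (c i) + Real.negMulLog (l i))) := by
        have e1 : ∑ i : B, (l i * Real.log (c i) + Real.negMulLog (l i))
            = ∑ α ∈ Ap.filter (fun α => 0 < lam α),
              (lam α * Real.log (c α) + Real.negMulLog (lam α)) := by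
          rw [Finset.sum_subset (Finset.filter_subset _ Ap),
            ← Finset.sum_subset hBsub (fun α _ hα => by simp [hlam0 α hα]),
            ← Finset.sum_coe_sort B]
          · simp only [hlamB]
          · intro α hα hα'
            have : lam α = 0 := by
              by_contra hne
              exact hα' (Finset.mem_filter.2 ⟨hα, lt_of_le_of_ne (hlnn α) (Ne.symm hne)⟩)
            simp [this]
        rw [e1, Real.exp_sum]
        refine Finset.prod_congr rfl fun α hα => ?_
        obtain ⟨h1, h2⟩ := hF α hα
        rw [Real.rpow_def_of_pos (div_pos h1 h2), Real.log_div h1.ne' h2.ne', Real.negMulLog]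
        congr 1
        ring
      rw [e]
      calc -cβ = Real.exp (Real.log (-cβ)) := (Real.exp_log (by linarith)).symm
        _ ≤ _ := Real.exp_le_exp.2 hlog
  · rintro ⟨lam, ⟨hnn, hs1, hsβ⟩, hle⟩ x
    set F := Ap.filter (fun α => 0 < lam α) with hF
    have hFsub : F ⊆ Ap := Finset.filter_subset _ _
    have hzero : ∀ α ∈ Ap, α ∉ F → lam α = 0 := by
      intro α hα hα'
      by_contra hne
      exact hα' (Finset.mem_filter.2 ⟨hα, lt_of_le_of_ne (hnn α hα) (Ne.symm hne)⟩)
    have hFpos : ∀ α ∈ F, 0 < lam α := fun α hα => (Finset.mem_filter.1 hα).2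
    have hcF : ∀ α ∈ F, 0 ≤ c α / lam α := fun α hα =>
      div_nonneg (hc α (hFsub hα)) (hFpos α hα).le
    have amgm := Real.geom_mean_le_arith_mean_weighted F lam
      (fun α => c α / lam α * Real.exp (∑ i, x i * α i))
      (fun α hα => (hFpos α hα).le)
      (by rw [Finset.sum_subset hFsub hzero, hs1])
      (fun α hα => mul_nonneg (hcF α hα) (Real.exp_pos _).le)
    have e1 : ∏ α ∈ F, (c α / lam α * Real.exp (∑ i, x i * α i)) ^ lam α
        = (∏ α ∈ F, (c α / lam α) ^ lam α) * Real.exp (∑ i, x i * β i) := by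
      have e2 : ∑ i, x i * β i = ∑ α ∈ F, (∑ i, x i * α i) * lam α := by
        rw [Finset.sum_subset hFsub (fun α hα hα' => by rw [hzero α hα hα', mul_zero]), ← hsβ]
        simp only [Finset.sum_apply, Pi.smul_apply, smul_eq_mul, Finset.mul_sum, Finset.sum_mul]
        rw [Finset.sum_comm]
        exact Finset.sum_congr rfl fun i _ => Finset.sum_congr rfl fun j _ => by ring
      rw [e2, Real.exp_sum, ← Finset.prod_mul_distrib]
      refine Finset.prod_congr rfl fun α hα => ?_
      rw [Real.mul_rpow (hcF α hα) (Real.exp_pos _).le, ← Real.exp_mul]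
    have e3 : ∑ α ∈ F, lam α * (c α / lam α * Real.exp (∑ i, x i * α i))
        ≤ ∑ α ∈ Ap, c α * Real.exp (∑ i, x i * α i) := by
      calc _ = ∑ α ∈ F, c α * Real.exp (∑ i, x i * α i) := by
            refine Finset.sum_congr rfl fun α hα => ?_
            rw [← mul_assoc, mul_div_cancel₀ _ (hFpos α hα).ne']
        _ ≤ _ := Finset.sum_le_sum_of_subset_of_nonneg hFsub
            fun α hα _ => mul_nonneg (hc α hα) (Real.exp_pos _).le
    rw [e1] at amgm
    have := mul_le_mul_of_nonneg_right hle (Real.exp_pos (∑ i, x i * β i)).le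
    linarith
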